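/- arXiv:1707.09265 — 3 statements merged into one kernel-verified Lean document; each statement's English description precedes it below -/
import Mathlib

section
/- For every real γ > 2 there exists a unique ξ₀ ∈ (0,1) such that F₂(γ,ξ₀) = 0; moreover ξ₀ < √(2/γ), F₂(γ,ξ) > 0 for all ξ ∈ (0,ξ₀), and F₂(γ,ξ) < 0 for all ξ ∈ (ξ₀,1]. -/
/-!
For `ξ > 0` the sign of `F₂ γ ξ` is the sign of the quartic
`g ξ = ξ³ F₂ γ ξ = (3/4) γ² ξ⁴ - γ² ξ³ + 1`. Its derivative is `3 γ² ξ² (ξ - 1)`, so `g` is strictly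
decreasing on `[0, 1]` (`quartic_lt`). Moreover `g 0 = 1`, and at `s = √(2/γ) < 1` one has
`g s = 4 - 2 γ s < 0`, because `(γ s)² = 2 γ > 4`. The intermediate value theorem on `[0, s]` gives
the zero, and monotonicity gives its uniqueness and the signs on either side.
-/

/-- The value of the degenerate one-dimensional variational functional
`J(u) = ∫₀¹ (a(u)|u'|²/2 - γ u) dx` on the one-jump candidate minimizer whose jump
is located at `ξ`. -/
noncomputable def F (γ ξ : ℝ) : ℝ :=
  γ ^ 2 * ξ ^ 3 / 8 - γ ^ 2 * ξ ^ 2 / 2 + γ ^ 2 * ξ / 2 - γ ^ 2 / 6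
    + 3 * γ * ξ / 2 - 2 * γ + 1 / (2 * ξ)

/-- The derivative in `ξ` of `F`. -/
noncomputable def F₁ (γ ξ : ℝ) : ℝ :=
  3 * γ ^ 2 * ξ ^ 2 / 8 - γ ^ 2 * ξ + γ ^ 2 / 2 + 3 * γ / 2 - 1 / (2 * ξ ^ 2)

/-- The second derivative in `ξ` of `F`. -/
noncomputable def F₂ (γ ξ : ℝ) : ℝ :=
  3 * γ ^ 2 * ξ / 4 - γ ^ 2 + 1 / ξ ^ 3

/-- The third derivative in `ξ` of `F`. -/
noncomputable def F₃ (γ ξ : ℝ) : ℝ :=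
  3 * γ ^ 2 / 4 - 3 / ξ ^ 4

/-- The numerator of `F₂`, that is `ξ³ F₂(γ, ξ)` for `ξ ≠ 0`. -/
noncomputable def quartic (γ ξ : ℝ) : ℝ := 3 / 4 * γ ^ 2 * ξ ^ 4 - γ ^ 2 * ξ ^ 3 + 1

lemma F₂_eq_quartic_div (γ : ℝ) {ξ : ℝ} (hξ : 0 < ξ) : F₂ γ ξ = quartic γ ξ / ξ ^ 3 := by
  unfold F₂ quartic
  field_simp

lemma quartic_lt {γ x y : ℝ} (hγ : 0 < γ) (hx : 0 ≤ x) (hxy : x < y) (hy : y ≤ 1) :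
    quartic γ y < quartic γ x := by
  have hy0 : 0 < y := hx.trans_lt hxy
  -- The difference of the two values is `γ² (y - x) / 4` times this gap.
  have key : 0 < 4 * (y ^ 2 + x * y + x ^ 2) - 3 * ((x + y) * (x ^ 2 + y ^ 2)) := by
    have h1 : 0 ≤ y ^ 2 * (1 - y) := mul_nonneg (sq_nonneg y) (by linarith)
    have h2 : 0 ≤ x * y * (1 - y) := mul_nonneg (mul_nonneg hx hy0.le) (by linarith)
    have h3 : 0 ≤ x ^ 2 * (1 - y) := mul_nonneg (sq_nonneg x) (by linarith)
    have h4 : 0 ≤ x ^ 2 * (1 - x) := mul_nonneg (sq_nonneg x) (by linarith)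
    have h5 : 0 < y * (y - x) := mul_pos hy0 (by linarith)
    have h6 : 0 ≤ x * (y - x) := mul_nonneg hx (by linarith)
    nlinarith
  have hpos := mul_pos (mul_pos (pow_pos hγ 2) (sub_pos.2 hxy)) key
  unfold quartic
  linarith

/-- For every real `γ > 2` there exists a unique `ξ₀ ∈ (0,1)` with `F₂(γ,ξ₀) = 0`;
moreover `ξ₀ < √(2/γ)`, `F₂(γ,·) > 0` on `(0,ξ₀)` and `F₂(γ,·) < 0` on `(ξ₀,1]`. -/
theorem F₂_unique_zero (γ : ℝ) (hγ : 2 < γ) :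
    ∃ ξ₀ ∈ Set.Ioo (0 : ℝ) 1, F₂ γ ξ₀ = 0 ∧
      (∀ ξ ∈ Set.Ioo (0 : ℝ) 1, F₂ γ ξ = 0 → ξ = ξ₀) ∧
      ξ₀ < Real.sqrt (2 / γ) ∧
      (∀ ξ ∈ Set.Ioo (0 : ℝ) ξ₀, 0 < F₂ γ ξ) ∧
      (∀ ξ ∈ Set.Ioc ξ₀ (1 : ℝ), F₂ γ ξ < 0) := by
  have hγ0 : 0 < γ := by linarith
  set s := Real.sqrt (2 / γ) with hs
  have hs0 : 0 < s := Real.sqrt_pos.2 (by positivity)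
  have hγs : γ * s ^ 2 = 2 := by
    rw [hs, Real.sq_sqrt (by positivity)]
    field_simp
  have hs1 : s < 1 := by
    by_contra! h
    have : 1 ≤ s ^ 2 := one_le_pow₀ h
    nlinarith
  have hs2 : 2 < γ * s := by nlinarith
  have hgs : quartic γ s < 0 := by
    have h : quartic γ s = 3 / 4 * (γ * s ^ 2) ^ 2 - (γ * s ^ 2) * (γ * s) + 1 := by
      unfold quartic
      ring
    rw [h, hγs]
    linarith
  have hg0 : 0 < quartic γ 0 := by norm_num [quartic]
  have hcont : ContinuousOn (quartic γ) (Set.Icc 0 s) := by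
    unfold quartic
    fun_prop
  obtain ⟨r, ⟨hr0, hrs⟩, hr⟩ := intermediate_value_Ioo' hs0.le hcont ⟨hgs, hg0⟩
  have hr1 : r < 1 := hrs.trans hs1
  have hleft : ∀ ξ ∈ Set.Ioo (0 : ℝ) r, 0 < F₂ γ ξ := by
    rintro ξ ⟨h0, h1⟩
    rw [F₂_eq_quartic_div γ h0]
    have := quartic_lt hγ0 h0.le h1 hr1.le
    exact div_pos (by linarith) (by positivity)
  have hright : ∀ ξ ∈ Set.Ioc r (1 : ℝ), F₂ γ ξ < 0 := by
    rintro ξ ⟨h0, h1⟩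
    have hξ : 0 < ξ := hr0.trans h0
    rw [F₂_eq_quartic_div γ hξ]
    have := quartic_lt hγ0 hr0.le h0 h1
    exact div_neg_of_neg_of_pos (by linarith) (by positivity)
  refine ⟨r, ⟨hr0, hr1⟩, ?_, ?_, hrs, hleft, hright⟩
  · rw [F₂_eq_quartic_div γ hr0, hr, zero_div]
  · rintro ξ ⟨h0, h1⟩ hz
    rcases lt_trichotomy ξ r with h | h | h
    · exact absurd hz (hleft ξ ⟨h0, h⟩).ne'
    · exact h
    · exact absurd hz (hright ξ ⟨h, h1.le⟩).ne
end

section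
/- For every real γ ≥ 2, the identity F(γ, √(2/γ)) − F(γ,1) = γ^{3/2}/√2 − γ²/8 − 5γ/2 + 2√2·√γ − 1/2 holds, and this quantity is ≤ 0, with equality if and only if γ = 2. -/
/-- For every real `γ ≥ 2`, the identity
`F(γ,√(2/γ)) - F(γ,1) = γ^{3/2}/√2 - γ²/8 - 5γ/2 + 2√2 √γ - 1/2` holds, and this
quantity is `≤ 0`, with equality iff `γ = 2`. -/
theorem M_nonpos (γ : ℝ) (hγ : 2 ≤ γ) :
    F γ (Real.sqrt (2 / γ)) - F γ 1
      = γ ^ ((3 : ℝ) / 2) / Real.sqrt 2 - γ ^ 2 / 8 - 5 * γ / 2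
        + 2 * Real.sqrt 2 * Real.sqrt γ - 1 / 2 ∧
    γ ^ ((3 : ℝ) / 2) / Real.sqrt 2 - γ ^ 2 / 8 - 5 * γ / 2
        + 2 * Real.sqrt 2 * Real.sqrt γ - 1 / 2 ≤ 0 ∧
    (γ ^ ((3 : ℝ) / 2) / Real.sqrt 2 - γ ^ 2 / 8 - 5 * γ / 2
        + 2 * Real.sqrt 2 * Real.sqrt γ - 1 / 2 = 0 ↔ γ = 2) := by
  obtain ⟨t, ht, rfl⟩ : ∃ t : ℝ, 1 ≤ t ∧ γ = 2 * t ^ 2 := by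
    refine ⟨Real.sqrt (γ / 2), ?_, ?_⟩
    · rw [Real.one_le_sqrt]; linarith
    · rw [Real.sq_sqrt (by linarith)]; ring
  have ht0 : 0 < t := by linarith
  have h2 : Real.sqrt 2 ^ 2 = 2 := Real.sq_sqrt (by norm_num)
  have h2pos : 0 < Real.sqrt 2 := by positivity
  have hsqrt : Real.sqrt (2 * t ^ 2) = Real.sqrt 2 * t := by
    rw [Real.sqrt_mul (by norm_num), Real.sqrt_sq ht0.le]
  have hxi : Real.sqrt (2 / (2 * t ^ 2)) = 1 / t := by
    rw [show 2 / (2 * t ^ 2) = (1 / t) ^ 2 by field_simp, Real.sqrt_sq (by positivity)]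
  have hpow : (2 * t ^ 2) ^ ((3 : ℝ) / 2) / Real.sqrt 2 = 2 * t ^ 3 := by
    rw [show (3 : ℝ) / 2 = 1 + 1 / 2 by norm_num, Real.rpow_add (by positivity), Real.rpow_one,
      ← Real.sqrt_eq_rpow, hsqrt]
    field_simp
  have hlin : 2 * Real.sqrt 2 * Real.sqrt (2 * t ^ 2) = 4 * t := by
    rw [hsqrt]; linear_combination 2 * t * h2
  rw [hpow, hlin, hxi]
  have hfac : 2 * t ^ 3 - (2 * t ^ 2) ^ 2 / 8 - 5 * (2 * t ^ 2) / 2 + 4 * t - 1 / 2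
      = -((t - 1) * ((t - 1) ^ 3 + 4 * (t - 1) + 4) / 2) := by ring
  have hs : 0 ≤ t - 1 := by linarith
  have hpos : 0 < (t - 1) ^ 3 + 4 * (t - 1) + 4 := by positivity
  refine ⟨?_, ?_, ?_⟩
  · unfold F
    field_simp
    ring
  · rw [hfac, neg_nonpos]
    positivity
  · rw [hfac]
    constructor
    · intro h
      have h1 : (t - 1) * ((t - 1) ^ 3 + 4 * (t - 1) + 4) = 0 := by linarith
      have h3 : t = 1 := by
        linarith [(mul_eq_zero.mp h1).resolve_right hpos.ne']
      rw [h3]; norm_num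
    · intro h
      have h3 : t = 1 := by nlinarith
      rw [h3]; norm_num
end

section
/- For every real γ > 2 there exists ξ* ∈ (0,1) such that F(γ,ξ*) ≤ F(γ,ξ) for all ξ ∈ (0,1]; that is, F(γ,·) attains its absolute minimum over (0,1] at an interior point of (0,1). -/
lemma F_inv_eq (γ : ℝ) (hγ : 2 < γ) :
    F γ (1 / γ) = -γ ^ 2 / 6 - γ + 1 + 1 / (8 * γ) := by
  have h : γ ≠ 0 := by positivity
  unfold F
  field_simp
  ring

lemma F_inv_lt_F_one (γ : ℝ) (hγ : 2 < γ) : F γ (1 / γ) < F γ 1 := by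
  have h : 1 / (8 * γ) < 1 / 16 := by
    apply one_div_lt_one_div_of_lt <;> linarith
  rw [F_inv_eq γ hγ]
  unfold F
  nlinarith

lemma F_inv_le_of_small (γ ξ : ℝ) (hγ : 2 < γ) (h0 : 0 < ξ) (hξ : ξ ≤ 1 / (2 * γ + 3)) :
    F γ (1 / γ) ≤ F γ ξ := by
  have h : 1 / (8 * γ) < 1 / 16 := by
    apply one_div_lt_one_div_of_lt <;> linarith
  have h2 : γ + 3 / 2 ≤ 1 / (2 * ξ) := by
    rw [le_div_iff₀ (by linarith)] at hξ
    rw [le_div_iff₀ (by linarith)]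
    linarith
  have h3 : 0 ≤ γ ^ 2 * ξ * (ξ - 2) ^ 2 / 8 + 3 * γ * ξ / 2 := by positivity
  rw [F_inv_eq γ hγ]
  unfold F
  nlinarith

/-- For every real `γ > 2`, `F(γ,·)` attains its absolute minimum over `(0,1]` at an
interior point of `(0,1)`. -/
theorem F_attains_min (γ : ℝ) (hγ : 2 < γ) :
    ∃ ξstar ∈ Set.Ioo (0 : ℝ) 1, ∀ ξ ∈ Set.Ioc (0 : ℝ) 1, F γ ξstar ≤ F γ ξ := by
  have hδ : (0 : ℝ) < 1 / (2 * γ + 3) := by positivity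
  have hmem : 1 / γ ∈ Set.Icc (1 / (2 * γ + 3)) (1 : ℝ) := by
    constructor
    · apply one_div_le_one_div_of_le <;> linarith
    · rw [div_le_one (by linarith)]
      linarith
  have hcont : ContinuousOn (F γ) (Set.Icc (1 / (2 * γ + 3)) 1) := by
    unfold F
    refine ContinuousOn.add (by fun_prop) (ContinuousOn.div (by fun_prop) (by fun_prop) ?_)
    intro x hx
    have : 0 < x := hδ.trans_le hx.1
    positivity
  obtain ⟨x, hx, hmin⟩ := isCompact_Icc.exists_isMinOn ⟨_, hmem⟩ hcont
  have hx' : F γ x ≤ F γ (1 / γ) := hmin hmem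
  refine ⟨x, ⟨hδ.trans_le hx.1, lt_of_le_of_ne hx.2 ?_⟩, fun ξ hξ => ?_⟩
  · rintro rfl
    exact absurd hx' (not_le.mpr (F_inv_lt_F_one γ hγ))
  · rcases le_total ξ (1 / (2 * γ + 3)) with h | h
    · exact hx'.trans (F_inv_le_of_small γ ξ hγ hξ.1 h)
    · exact hmin ⟨h, hξ.2⟩
end
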